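/- arXiv:2011.05170 — 2 statements merged into one kernel-verified Lean document; each statement's English description precedes it below -/
import Mathlib

section
/- There is no duality gap between the primal linear program and its dual: inf { ∫_{X×Y} T dφ : φ a finite nonnegative Borel measure on X×Y with ∫ x^{d_x} y^{d_y} dφ = μ_{(d_x,d_y)} for all (d_x,d_y) ∈ D } equals sup { ∫_X (h₁(x) + h₂(x) f(x)) dλ(x) : h₁, h₂ continuous real-valued functions on X such that h₁(x) + h₂(x)·y ≤ T(x,y) for all (x,y) ∈ X×Y }. -/
open MeasureTheory Set

noncomputable section

/-! Both optimal values equal `∫ T(x, f(x)) dλ`, for any continuous `T` that is convex in `y`.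

The graph measure `μ` is primal feasible with this value. Conversely, by Stone–Weierstrass a primal
feasible `φ` integrates `h₁(x) + h₂(x) y` as `μ` does for all continuous `h₁, h₂`, which is weak
duality.

For a given `h₂`, the best `h₁` is `h₁(x) = -T*(x, h₂(x))`, where `T*` is the convex conjugate of
`T` in `y`. An optimal `h₂(x)` would be a subgradient of `T(x, ·)` at `f(x)`, which need not exist
at the boundary and need not depend continuously on `x`. However, the `δ`-subgradients at `y` form a
nonempty convex set, and a given slope remains a `δ`-subgradient when `(x, y)` varies a little. A
partition of unity on the compact set `X × Y` thus selects a `δ`-subgradient `q(x, y)` continuously.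
Approximating `q(x, f(x))` in `L¹(λ)` by a continuous `h₂` costs little because `T*` is Lipschitz in
the slope. -/

section Conjugate

/-- The convex conjugate of `F` on the domain `Y`, i.e. of the function equal to `F` on `Y` and to
`+∞` elsewhere. The supremum is finite when `Y` is compact and nonempty and `F` is continuous. -/
def conjugate (Y : Set ℝ) (F : ℝ → ℝ) (s : ℝ) : ℝ := ⨆ y : Y, (s * y - F y)

variable {Y : Set ℝ} {F : ℝ → ℝ}

theorem mul_sub_le_conjugate (hY : IsCompact Y) (hF : ContinuousOn F Y) {y : ℝ} (hy : y ∈ Y)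
    (s : ℝ) : s * y - F y ≤ conjugate Y F s := by
  have hbdd : BddAbove ((fun y ↦ s * y - F y) '' Y) := hY.bddAbove_image (by fun_prop)
  rw [image_eq_range] at hbdd
  exact le_ciSup hbdd ⟨y, hy⟩

theorem conjugate_le (hY : Y.Nonempty) {s c : ℝ} (h : ∀ y ∈ Y, s * y - F y ≤ c) :
    conjugate Y F s ≤ c :=
  have := hY.to_subtype
  ciSup_le fun y ↦ h y y.2

theorem convexOn_conjugate (hY : IsCompact Y) (hne : Y.Nonempty) (hF : ContinuousOn F Y) :
    ConvexOn ℝ univ (conjugate Y F) := by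
  refine ⟨convex_univ, fun s _ r _ a b ha hb hab ↦ conjugate_le hne fun y hy ↦ ?_⟩
  have hs := mul_le_mul_of_nonneg_left (mul_sub_le_conjugate hY hF hy s) ha
  have hr := mul_le_mul_of_nonneg_left (mul_sub_le_conjugate hY hF hy r) hb
  simp only [smul_eq_mul]
  linear_combination hs + hr + F y * hab

theorem mul_le_mul_add_mul_abs_sub {y M : ℝ} (hy : |y| ≤ M) (s r : ℝ) :
    s * y ≤ r * y + M * |s - r| := by
  have h : (s - r) * y ≤ |s - r| * M := calc
    (s - r) * y ≤ |s - r| * |y| := (le_abs_self _).trans_eq (abs_mul _ _)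
    _ ≤ |s - r| * M := by gcongr
  linarith

theorem conjugate_le_conjugate_add (hY : IsCompact Y) (hne : Y.Nonempty) (hF : ContinuousOn F Y)
    {M : ℝ} (hM : ∀ y ∈ Y, |y| ≤ M) (s r : ℝ) :
    conjugate Y F s ≤ conjugate Y F r + M * |s - r| :=
  conjugate_le hne fun y hy ↦ by
    linarith [mul_sub_le_conjugate hY hF hy r, mul_le_mul_add_mul_abs_sub (hM y hy) s r]

theorem mul_sub_conjugate_le (hY : IsCompact Y) (hF : ContinuousOn F Y) {M : ℝ}
    (hM : ∀ y ∈ Y, |y| ≤ M) {y : ℝ} (hy : y ∈ Y) (s r : ℝ) :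
    s * y - conjugate Y F s ≤ r * y - conjugate Y F r + 2 * M * |s - r| := by
  have hconj := conjugate_le_conjugate_add hY ⟨y, hy⟩ hF hM r s
  rw [abs_sub_comm] at hconj
  linarith [mul_le_mul_add_mul_abs_sub (hM y hy) s r]

theorem exists_conjugate_add_lt (hY : IsClosed Y) (hF : ContinuousOn F Y) (hconv : ConvexOn ℝ Y F)
    {y δ : ℝ} (hy : y ∈ Y) (hδ : 0 < δ) : ∃ s, conjugate Y F s + F y < s * y + δ := by
  obtain ⟨s, c, hle, heq⟩ := hconv.exists_affine_le_of_lt_real hy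
    (sub_lt_self (F y) (half_pos hδ)) hY hF.lowerSemicontinuousOn
  have hconj : conjugate Y F s ≤ -c := conjugate_le ⟨y, hy⟩ fun z hz ↦ by linarith [hle z hz]
  exact ⟨s, by linarith⟩

variable {E : Type*} [TopologicalSpace E] {X : Set E} {T : E × ℝ → ℝ}

theorem continuousOn_conjugate (hY : IsCompact Y) (hT : ContinuousOn T (X ×ˢ Y)) :
    ContinuousOn (fun p : E × ℝ ↦ conjugate Y (fun y ↦ T (p.1, y)) p.2) (X ×ˢ univ) := by
  let g (p : ↥(X ×ˢ (univ : Set ℝ))) (y : Y) : ℝ := p.1.2 * y - T (p.1.1, y)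
  have hg : Continuous ↿g :=
    .sub (by fun_prop) (hT.comp_continuous (by fun_prop) fun p ↦ ⟨p.1.2.1, p.2.2⟩)
  have hsup := (isCompact_iff_isCompact_univ.mp hY).continuous_sSup hg
  simp only [image_univ] at hsup
  exact continuousOn_iff_continuous_domRestrict.mpr hsup

theorem continuousOn_conjugate_comp (hY : IsCompact Y) (hT : ContinuousOn T (X ×ˢ Y)) {h : E → ℝ}
    (hh : ContinuousOn h X) : ContinuousOn (fun x ↦ conjugate Y (fun y ↦ T (x, y)) (h x)) X :=
  (continuousOn_conjugate hY hT).comp (continuousOn_id.prodMk hh) fun x hx ↦ ⟨hx, mem_univ (h x)⟩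

theorem exists_continuous_conjugate_add_lt [TopologicalSpace.MetrizableSpace E] (hX : IsCompact X)
    (hY : IsCompact Y) (hT : ContinuousOn T (X ×ˢ Y))
    (hconv : ∀ x ∈ X, ConvexOn ℝ Y fun y ↦ T (x, y)) {δ : ℝ} (hδ : 0 < δ) :
    ∃ q : C(E × ℝ, ℝ), ∀ p ∈ X ×ˢ Y,
      conjugate Y (fun y ↦ T (p.1, y)) (q p) + T p < q p * p.2 + δ := by
  have hfiber (x : E) (hx : x ∈ X) : ContinuousOn (fun y ↦ T (x, y)) Y :=
    hT.comp (by fun_prop) fun y hy ↦ ⟨hx, hy⟩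
  have : CompactSpace ↥(X ×ˢ Y) := isCompact_iff_compactSpace.mp (hX.prod hY)
  let slopes (p : ↥(X ×ˢ Y)) : Set ℝ :=
    {s | conjugate Y (fun y ↦ T (p.1.1, y)) s + T p < s * p.1.2 + δ}
  have hslopes_convex (p : ↥(X ×ˢ Y)) : Convex ℝ (slopes p) := by
    have hp := convexOn_conjugate hY ⟨_, p.2.2⟩ (hfiber _ p.2.1)
    have hlin := (LinearMap.mulRight ℝ (-p.1.2)).convexOn convex_univ
    have heq : slopes p =
        {s ∈ univ | conjugate Y (fun y ↦ T (p.1.1, y)) s + s * -p.1.2 < δ - T p} := by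
      ext s
      simp only [slopes, mem_ofPred_eq, mem_univ, true_and]
      constructor <;> intro h <;> linarith
    rw [heq]
    exact (hp.add hlin).convex_lt (δ - T p)
  have hslopes_open (p : ↥(X ×ˢ Y)) : ∃ s, ∀ᶠ p' in nhds p, s ∈ slopes p' := by
    obtain ⟨s, hs⟩ := exists_conjugate_add_lt hY.isClosed (hfiber _ p.2.1) (hconv _ p.2.1) p.2.2 hδ
    have hcont : Continuous fun p : ↥(X ×ˢ Y) ↦ conjugate Y (fun y ↦ T (p.1.1, y)) s + T p :=
      ((continuousOn_conjugate hY hT).comp_continuous (f := fun p : ↥(X ×ˢ Y) ↦ (p.1.1, s))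
        (by fun_prop) fun p ↦ ⟨p.2.1, mem_univ s⟩).add
        (hT.comp_continuous continuous_subtype_val Subtype.prop)
    exact ⟨s, hcont.continuousAt.eventually_lt (by fun_prop) hs⟩
  obtain ⟨q₀, hq₀⟩ := exists_continuous_forall_mem_convex_of_local_const hslopes_convex hslopes_open
  obtain ⟨q, rfl⟩ := q₀.exists_restrict_eq (hX.prod hY).isClosed
  exact ⟨q, fun p hp ↦ hq₀ ⟨p, hp⟩⟩

end Conjugate

section Integration

variable {E : Type*} [MeasurableSpace E]

theorem integrable_of_continuousOn_of_ae_mem [TopologicalSpace E] [T2Space E]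
    [OpensMeasurableSpace E] {μ : Measure E}
    [IsFiniteMeasure μ] {K : Set E} (hK : IsCompact K) (hμ : ∀ᵐ x ∂μ, x ∈ K) {F : E → ℝ}
    (hF : ContinuousOn F K) : Integrable F μ := by
  have h := hF.integrableOn_compact (μ := μ) hK
  rwa [IntegrableOn, Measure.restrict_eq_self_of_ae_mem hμ] at h

/-- The image of `lam` under `x ↦ (x, f x)`, which is the measure `δ_{f(x)}(dy) λ(dx)`. -/
def graphMeasure (lam : Measure E) (f : E → ℝ) : Measure (E × ℝ) := lam.map fun x ↦ (x, f x)

variable {K : Set (E × ℝ)} {lam : Measure E} {f : E → ℝ}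

instance [IsFiniteMeasure lam] : IsFiniteMeasure (graphMeasure lam f) :=
  Measure.isFiniteMeasure_map _ _

theorem ae_graphMeasure_mem (hK : MeasurableSet K) (hf : AEMeasurable f lam)
    (hfK : ∀ᵐ x ∂lam, (x, f x) ∈ K) : ∀ᵐ p ∂graphMeasure lam f, p ∈ K :=
  (ae_map_iff (aemeasurable_id'.prodMk hf) hK).mpr hfK

variable [TopologicalSpace E] [T2Space E] [OpensMeasurableSpace E] [IsFiniteMeasure lam]
  {F : E × ℝ → ℝ}

theorem integrable_graphMeasure (hK : IsCompact K) (hf : AEMeasurable f lam)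
    (hfK : ∀ᵐ x ∂lam, (x, f x) ∈ K) (hF : ContinuousOn F K) : Integrable F (graphMeasure lam f) :=
  integrable_of_continuousOn_of_ae_mem hK (ae_graphMeasure_mem hK.measurableSet hf hfK) hF

theorem integrable_comp_graph (hK : IsCompact K) (hf : AEMeasurable f lam)
    (hfK : ∀ᵐ x ∂lam, (x, f x) ∈ K) (hF : ContinuousOn F K) :
    Integrable (fun x ↦ F (x, f x)) lam :=
  (integrable_graphMeasure hK hf hfK hF).comp_aemeasurable (aemeasurable_id'.prodMk hf)

theorem integral_graphMeasure (hK : IsCompact K) (hf : AEMeasurable f lam)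
    (hfK : ∀ᵐ x ∂lam, (x, f x) ∈ K) (hF : ContinuousOn F K) :
    ∫ p, F p ∂graphMeasure lam f = ∫ x, F (x, f x) ∂lam :=
  integral_map (aemeasurable_id'.prodMk hf)
    (integrable_graphMeasure hK hf hfK hF).aestronglyMeasurable

end Integration

section Composition

variable {Ω E : Type*} [MeasurableSpace Ω] [TopologicalSpace E] [T2Space E] [MeasurableSpace E]
  [OpensMeasurableSpace E] {K : Set E} {P : Measure Ω} {u : Ω → E} {v : Ω → ℝ}
  {g h : E → ℝ}

theorem integrable_comp_mul (hK : IsCompact K) (hh : ContinuousOn h K) (hu : AEMeasurable u P)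
    (huK : ∀ᵐ ω ∂P, u ω ∈ K) (hv : Integrable v P) : Integrable (fun ω ↦ h (u ω) * v ω) P := by
  obtain ⟨C, hC⟩ := hK.exists_bound_of_continuousOn hh
  have hmap : AEStronglyMeasurable h (P.map u) := by
    have h := hh.aestronglyMeasurable (μ := P.map u) hK.measurableSet
    rwa [Measure.restrict_eq_self_of_ae_mem ((ae_map_iff hu hK.measurableSet).mpr huK)] at h
  exact hv.bdd_mul (hmap.comp_aemeasurable hu) (huK.mono fun ω hω ↦ hC _ hω)

theorem abs_integral_comp_mul_sub_le (hK : IsCompact K) (hg : ContinuousOn g K)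
    (hh : ContinuousOn h K) {δ : ℝ} (hgh : ∀ x ∈ K, |g x - h x| ≤ δ) (hu : AEMeasurable u P)
    (huK : ∀ᵐ ω ∂P, u ω ∈ K) (hv : Integrable v P) :
    |∫ ω, g (u ω) * v ω ∂P - ∫ ω, h (u ω) * v ω ∂P| ≤ δ * ∫ ω, |v ω| ∂P := by
  rw [← integral_sub (integrable_comp_mul hK hg hu huK hv) (integrable_comp_mul hK hh hu huK hv),
    ← integral_const_mul]
  refine norm_integral_le_of_norm_le (f := fun ω ↦ g (u ω) * v ω - h (u ω) * v ω)
    (hv.abs.const_mul δ) ?_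
  filter_upwards [huK] with ω hω
  rw [← sub_mul, norm_mul]
  exact mul_le_mul_of_nonneg_right (hgh _ hω) (norm_nonneg _)

end Composition

section Dual

variable {E : Type*} [TopologicalSpace E] {X : Set E} {Y : Set ℝ}

theorem continuousOn_add_mul_snd {h₁ h₂ : E → ℝ} (hh₁ : ContinuousOn h₁ X)
    (hh₂ : ContinuousOn h₂ X) :
    ContinuousOn (fun p : E × ℝ ↦ h₁ p.1 + h₂ p.1 * p.2) (X ×ˢ Y) :=
  have hfst : MapsTo Prod.fst (X ×ˢ Y) X := fun _ hp ↦ hp.1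
  (hh₁.comp continuousOn_fst hfst).add ((hh₂.comp continuousOn_fst hfst).mul continuousOn_snd)

variable [MeasurableSpace E] {lam : Measure E} {f : E → ℝ} {T : E × ℝ → ℝ}

/-- The objective values of the dual linear program, which maximizes `∫ (h₁ + h₂ f) dλ` over
continuous `h₁, h₂` with `h₁(x) + h₂(x) y ≤ T(x, y)`. -/
def dualValues (X : Set E) (Y : Set ℝ) (lam : Measure E) (f : E → ℝ) (T : E × ℝ → ℝ) : Set ℝ :=
  {w : ℝ | ∃ h₁ h₂ : E → ℝ, ContinuousOn h₁ X ∧ ContinuousOn h₂ X ∧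
    (∀ x ∈ X, ∀ y ∈ Y, h₁ x + h₂ x * y ≤ T (x, y)) ∧ w = ∫ x, (h₁ x + h₂ x * f x) ∂lam}

variable [IsFiniteMeasure lam]

theorem le_integral_of_mem_dualValues [T2Space E] [OpensMeasurableSpace E] (hX : IsCompact X)
    (hY : IsCompact Y) (hf : AEMeasurable f lam) (hfXY : ∀ᵐ x ∂lam, (x, f x) ∈ X ×ˢ Y)
    (hT : ContinuousOn T (X ×ˢ Y)) {w : ℝ} (hw : w ∈ dualValues X Y lam f T) :
    w ≤ ∫ x, T (x, f x) ∂lam := by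
  obtain ⟨h₁, h₂, hh₁, hh₂, hle, rfl⟩ := hw
  refine integral_mono_ae (integrable_comp_graph (hX.prod hY) hf hfXY
    (continuousOn_add_mul_snd hh₁ hh₂)) (integrable_comp_graph (hX.prod hY) hf hfXY hT) ?_
  filter_upwards [hfXY] with x hx using hle x hx.1 _ hx.2

theorem integral_le_integral_conjugate_add [T2Space E] [OpensMeasurableSpace E]
    (hX : IsCompact X) (hY : IsCompact Y) (hf : AEMeasurable f lam)
    (hfXY : ∀ᵐ x ∂lam, (x, f x) ∈ X ×ˢ Y) (hT : ContinuousOn T (X ×ˢ Y))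
    {M δ : ℝ} (hYM : ∀ y ∈ Y, |y| ≤ M) {q : C(E × ℝ, ℝ)}
    (hq : ∀ p ∈ X ×ˢ Y, conjugate Y (fun y ↦ T (p.1, y)) (q p) + T p ≤ q p * p.2 + δ)
    {h : E → ℝ} (hh : ContinuousOn h X) :
    ∫ x, T (x, f x) ∂lam ≤ ∫ x, (-conjugate Y (fun y ↦ T (x, y)) (h x) + h x * f x) ∂lam +
      (2 * M * ∫ x, |q (x, f x) - h x| ∂lam + lam.real univ * δ) := by
  have hK := hX.prod hY
  have hpointwise : ∀ᵐ x ∂lam, T (x, f x) ≤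
      -conjugate Y (fun y ↦ T (x, y)) (h x) + h x * f x + (2 * M * |q (x, f x) - h x| + δ) := by
    filter_upwards [hfXY] with x hx
    have hfiber : ContinuousOn (fun y ↦ T (x, y)) Y := hT.comp (by fun_prop) fun y hy ↦ ⟨hx.1, hy⟩
    linarith [hq _ hx, mul_sub_conjugate_le hY hfiber hYM hx.2 (q (x, f x)) (h x)]
  have hdual : Integrable (fun x ↦ -conjugate Y (fun y ↦ T (x, y)) (h x) + h x * f x) lam :=
    integrable_comp_graph hK hf hfXY
      (continuousOn_add_mul_snd (continuousOn_conjugate_comp hY hT hh).neg hh)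
  have hdist : Integrable (fun x ↦ 2 * M * |q (x, f x) - h x|) lam :=
    have hhfst := hh.comp continuousOn_fst fun p (hp : p ∈ X ×ˢ Y) ↦ hp.1
    (integrable_comp_graph hK hf hfXY (q.continuous.continuousOn.sub hhfst).abs).const_mul _
  have herror : Integrable (fun x ↦ 2 * M * |q (x, f x) - h x| + δ) lam :=
    hdist.add (integrable_const δ)
  calc
    _ ≤ ∫ x, (-conjugate Y (fun y ↦ T (x, y)) (h x) + h x * f x +
          (2 * M * |q (x, f x) - h x| + δ)) ∂lam :=
      integral_mono_ae (integrable_comp_graph hK hf hfXY hT) (hdual.add herror) hpointwise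
    _ = _ := by
      rw [integral_add hdual herror, integral_add hdist (integrable_const δ), integral_const_mul,
        integral_const, smul_eq_mul]

variable [TopologicalSpace.MetrizableSpace E] [BorelSpace E]

theorem exists_mem_dualValues_integral_le_add (hX : IsCompact X) (hY : IsCompact Y)
    (hf : AEMeasurable f lam) (hfXY : ∀ᵐ x ∂lam, (x, f x) ∈ X ×ˢ Y)
    (hT : ContinuousOn T (X ×ˢ Y)) (hconv : ∀ x ∈ X, ConvexOn ℝ Y fun y ↦ T (x, y))
    {ε : ℝ} (hε : 0 < ε) : ∃ w ∈ dualValues X Y lam f T, ∫ x, T (x, f x) ∂lam ≤ w + ε := by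
  obtain ⟨M, hM, hYM⟩ := hY.isBounded.exists_pos_norm_le
  set m := lam.real univ
  have hMm : 0 < 2 * M + m := by positivity
  have hδ : 0 < ε / (2 * M + m) := div_pos hε hMm
  obtain ⟨q, hq⟩ := exists_continuous_conjugate_add_lt hX hY hT hconv hδ
  obtain ⟨h, hqh, -⟩ := (integrable_comp_graph (hX.prod hY) hf hfXY
    q.continuous.continuousOn).exists_boundedContinuous_integral_sub_le hδ
  have hcont : ContinuousOn h X := h.continuous.continuousOn
  refine ⟨_, ⟨fun x ↦ -conjugate Y (fun y ↦ T (x, y)) (h x), h,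
    (continuousOn_conjugate_comp hY hT hcont).neg, hcont, fun x hx y hy ↦ ?_, rfl⟩, ?_⟩
  · have hfiber : ContinuousOn (fun y ↦ T (x, y)) Y := hT.comp (by fun_prop) fun y hy ↦ ⟨hx, hy⟩
    linarith [mul_sub_le_conjugate hY hfiber hy (h x)]
  · refine (integral_le_integral_conjugate_add hX hY hf hfXY hT hYM (fun p hp ↦ (hq p hp).le)
      hcont).trans (add_le_add_right ?_ _)
    calc
      _ ≤ 2 * M * (ε / (2 * M + m)) + m * (ε / (2 * M + m)) := by gcongr; exact hqh
      _ = ε := by rw [← add_mul, mul_div_cancel₀ ε hMm.ne']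

theorem isLUB_dualValues (hX : IsCompact X) (hY : IsCompact Y) (hf : AEMeasurable f lam)
    (hfXY : ∀ᵐ x ∂lam, (x, f x) ∈ X ×ˢ Y) (hT : ContinuousOn T (X ×ˢ Y))
    (hconv : ∀ x ∈ X, ConvexOn ℝ Y fun y ↦ T (x, y)) :
    IsLUB (dualValues X Y lam f T) (∫ x, T (x, f x) ∂lam) := by
  refine ⟨fun w hw ↦ le_integral_of_mem_dualValues hX hY hf hfXY hT hw, fun b hb ↦ ?_⟩
  refine le_of_forall_pos_le_add fun ε hε ↦ ?_
  obtain ⟨w, hw, hle⟩ := exists_mem_dualValues_integral_le_add hX hY hf hfXY hT hconv hε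
  exact hle.trans (add_le_add_left (hb hw) ε)

end Dual

section Moments

theorem exists_mvPolynomial_near {σ : Type*} {X : Set (σ → ℝ)} (hX : IsCompact X)
    {h : (σ → ℝ) → ℝ} (hh : ContinuousOn h X) {δ : ℝ} (hδ : 0 < δ) :
    ∃ P : MvPolynomial σ ℝ, ∀ x ∈ X, |MvPolynomial.eval x P - h x| < δ := by
  have : CompactSpace X := isCompact_iff_compactSpace.mp hX
  let coord (i : σ) : C(X, ℝ) := ⟨fun x ↦ x.1 i, (continuous_apply i).comp continuous_subtype_val⟩
  have hsep : (MvPolynomial.aeval (R := ℝ) coord).range.SeparatesPoints := fun x y hxy ↦ by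
    obtain ⟨i, hi⟩ := Function.ne_iff.mp (Subtype.coe_ne_coe.mpr hxy)
    exact ⟨coord i, ⟨coord i, ⟨MvPolynomial.X i, MvPolynomial.aeval_X coord i⟩, rfl⟩, hi⟩
  obtain ⟨⟨_, P, rfl⟩, hP⟩ := ContinuousMap.exists_mem_subalgebra_near_continuous_of_separatesPoints
    _ hsep (X.domRestrict h) (continuousOn_iff_continuous_domRestrict.mp hh) δ hδ
  have heval (x : X) : MvPolynomial.aeval coord P x = MvPolynomial.eval x.1 P :=
    DFunLike.congr_fun (MvPolynomial.algHom_ext (f := (ContinuousMap.evalAlgHom ℝ ℝ x).comp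
      (MvPolynomial.aeval coord)) (g := MvPolynomial.aeval x.1) fun i ↦ by simp [coord]) P
  exact ⟨P, fun x hx ↦ by simpa [heval] using hP ⟨x, hx⟩⟩

variable {Ω Ω' ι : Type*} [MeasurableSpace Ω] [MeasurableSpace Ω'] [Fintype ι]
  {X : Set (ι → ℝ)} {h : (ι → ℝ) → ℝ}
  {P : Measure Ω} {u : Ω → ι → ℝ} {v : Ω → ℝ} {Q : Measure Ω'} {u' : Ω' → ι → ℝ} {v' : Ω' → ℝ}

theorem integral_eval_mul_eq_of_moments_eq (hX : IsCompact X) (hu : AEMeasurable u P)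
    (huX : ∀ᵐ ω ∂P, u ω ∈ X) (hv : Integrable v P) (hu' : AEMeasurable u' Q)
    (huX' : ∀ᵐ ω ∂Q, u' ω ∈ X) (hv' : Integrable v' Q)
    (hmoments : ∀ d : ι → ℕ,
      ∫ ω, (∏ i, u ω i ^ d i) * v ω ∂P = ∫ ω, (∏ i, u' ω i ^ d i) * v' ω ∂Q)
    (p : MvPolynomial ι ℝ) :
    ∫ ω, MvPolynomial.eval (u ω) p * v ω ∂P = ∫ ω, MvPolynomial.eval (u' ω) p * v' ω ∂Q := by
  have hmonomial (d : ι → ℕ) : ContinuousOn (fun x : ι → ℝ ↦ ∏ i, x i ^ d i) X := by fun_prop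
  simp only [MvPolynomial.eval_eq', Finset.sum_mul, mul_assoc]
  rw [integral_finsetSum _ fun (d : ι →₀ ℕ) _ ↦
      (integrable_comp_mul hX (hmonomial d) hu huX hv).const_mul _,
    integral_finsetSum _ fun (d : ι →₀ ℕ) _ ↦
      (integrable_comp_mul hX (hmonomial d) hu' huX' hv').const_mul _]
  simp only [integral_const_mul, hmoments]

theorem integral_comp_mul_eq_of_moments_eq (hX : IsCompact X) (hh : ContinuousOn h X)
    (hu : AEMeasurable u P) (huX : ∀ᵐ ω ∂P, u ω ∈ X) (hv : Integrable v P)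
    (hu' : AEMeasurable u' Q) (huX' : ∀ᵐ ω ∂Q, u' ω ∈ X) (hv' : Integrable v' Q)
    (hmoments : ∀ d : ι → ℕ,
      ∫ ω, (∏ i, u ω i ^ d i) * v ω ∂P = ∫ ω, (∏ i, u' ω i ^ d i) * v' ω ∂Q) :
    ∫ ω, h (u ω) * v ω ∂P = ∫ ω, h (u' ω) * v' ω ∂Q := by
  set C := ∫ ω, |v ω| ∂P + ∫ ω, |v' ω| ∂Q
  have hC : 0 ≤ C := add_nonneg (integral_nonneg fun _ ↦ abs_nonneg _)
    (integral_nonneg fun _ ↦ abs_nonneg _)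
  refine eq_of_forall_dist_le fun ε hε ↦ ?_
  obtain ⟨p, hp⟩ := exists_mvPolynomial_near hX hh (show 0 < ε / (C + 1) by positivity)
  have hcont := (MvPolynomial.continuous_eval p).continuousOn (s := X)
  have hP := abs_integral_comp_mul_sub_le hX hcont hh (fun x hx ↦ (hp x hx).le) hu huX hv
  have hQ := abs_integral_comp_mul_sub_le hX hcont hh (fun x hx ↦ (hp x hx).le) hu' huX' hv'
  rw [integral_eval_mul_eq_of_moments_eq hX hu huX hv hu' huX' hv' hmoments p, abs_sub_comm] at hP
  calc
    _ ≤ ε / (C + 1) * ∫ ω, |v ω| ∂P + ε / (C + 1) * ∫ ω, |v' ω| ∂Q :=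
      (dist_triangle _ _ _).trans (add_le_add hP hQ)
    _ = ε / (C + 1) * C := (mul_add _ _ _).symm
    _ ≤ ε / (C + 1) * (C + 1) := by gcongr; linarith
    _ = ε := by field_simp

end Moments

section Primal

variable {ι : Type*} [Fintype ι] {X : Set (ι → ℝ)} {Y : Set ℝ} {lam : Measure (ι → ℝ)}
  [IsFiniteMeasure lam] {f : (ι → ℝ) → ℝ} {T : (ι → ℝ) × ℝ → ℝ}

/-- The objective values of the primal linear program, which minimizes `∫ T dφ` over finite
measures `φ` on `X × Y` that have the same moments of degree at most one in `y` as
`graphMeasure lam f`. -/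
def primalValues (X : Set (ι → ℝ)) (Y : Set ℝ) (lam : Measure (ι → ℝ)) (f : (ι → ℝ) → ℝ)
    (T : (ι → ℝ) × ℝ → ℝ) : Set ℝ :=
  {v : ℝ | ∃ φ : Measure ((ι → ℝ) × ℝ), IsFiniteMeasure φ ∧ φ ((X ×ˢ Y)ᶜ) = 0 ∧
    (∀ d : (ι → ℕ) × ℕ, d.2 ≤ 1 →
      ∫ p : (ι → ℝ) × ℝ, (∏ i, p.1 i ^ d.1 i) * p.2 ^ d.2 ∂φ
        = ∫ x, (∏ i, x i ^ d.1 i) * f x ^ d.2 ∂lam) ∧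
    v = ∫ p, T p ∂φ}

theorem integral_mem_primalValues (hX : IsCompact X) (hY : IsCompact Y) (hf : AEMeasurable f lam)
    (hfXY : ∀ᵐ x ∂lam, (x, f x) ∈ X ×ˢ Y) (hT : ContinuousOn T (X ×ˢ Y)) :
    ∫ x, T (x, f x) ∂lam ∈ primalValues X Y lam f T :=
  have hK := hX.prod hY
  ⟨graphMeasure lam f, inferInstance, ae_graphMeasure_mem hK.measurableSet hf hfXY,
    fun d _ ↦ integral_graphMeasure hK hf hfXY
      (F := fun p : (ι → ℝ) × ℝ ↦ (∏ i, p.1 i ^ d.1 i) * p.2 ^ d.2) (by fun_prop),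
    (integral_graphMeasure hK hf hfXY hT).symm⟩

theorem integral_add_mul_snd_eq_of_moments_eq (hX : IsCompact X) (hY : IsCompact Y)
    (hf : AEMeasurable f lam) (hfXY : ∀ᵐ x ∂lam, (x, f x) ∈ X ×ˢ Y)
    {φ : Measure ((ι → ℝ) × ℝ)} [IsFiniteMeasure φ] (hφ : ∀ᵐ p ∂φ, p ∈ X ×ˢ Y)
    (hmoments : ∀ d : (ι → ℕ) × ℕ, d.2 ≤ 1 →
      ∫ p : (ι → ℝ) × ℝ, (∏ i, p.1 i ^ d.1 i) * p.2 ^ d.2 ∂φ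
        = ∫ x, (∏ i, x i ^ d.1 i) * f x ^ d.2 ∂lam)
    {h₁ h₂ : (ι → ℝ) → ℝ} (hh₁ : ContinuousOn h₁ X) (hh₂ : ContinuousOn h₂ X) :
    ∫ p, (h₁ p.1 + h₂ p.1 * p.2) ∂φ = ∫ x, (h₁ x + h₂ x * f x) ∂lam := by
  have hK := hX.prod hY
  have hφX : ∀ᵐ p ∂φ, p.1 ∈ X := hφ.mono fun p hp ↦ hp.1
  have hlamX : ∀ᵐ x ∂lam, x ∈ X := hfXY.mono fun x hx ↦ hx.1
  have hφpow (k : ℕ) : Integrable (fun p : (ι → ℝ) × ℝ ↦ p.2 ^ k) φ :=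
    integrable_of_continuousOn_of_ae_mem hK hφ (by fun_prop)
  have hlampow (k : ℕ) : Integrable (fun x ↦ f x ^ k) lam :=
    integrable_comp_graph hK hf hfXY (F := fun p ↦ p.2 ^ k) (by fun_prop)
  have hweighted (k : ℕ) (hk : k ≤ 1) {h : (ι → ℝ) → ℝ} (hh : ContinuousOn h X) :
      ∫ p, h p.1 * p.2 ^ k ∂φ = ∫ x, h x * f x ^ k ∂lam :=
    integral_comp_mul_eq_of_moments_eq hX hh measurable_fst.aemeasurable hφX (hφpow k)
      aemeasurable_id' hlamX (hlampow k) fun d ↦ hmoments (d, k) hk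
  have hφint (k : ℕ) {h : (ι → ℝ) → ℝ} (hh : ContinuousOn h X) :=
    integrable_comp_mul hX hh measurable_fst.aemeasurable hφX (hφpow k)
  have hlamint (k : ℕ) {h : (ι → ℝ) → ℝ} (hh : ContinuousOn h X) :=
    integrable_comp_mul hX hh aemeasurable_id' hlamX (hlampow k)
  calc
    _ = ∫ p, (h₁ p.1 * p.2 ^ 0 + h₂ p.1 * p.2 ^ 1) ∂φ := by simp only [pow_zero, pow_one, mul_one]
    _ = ∫ x, (h₁ x * f x ^ 0 + h₂ x * f x ^ 1) ∂lam := by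
      rw [integral_add (hφint 0 hh₁) (hφint 1 hh₂), integral_add (hlamint 0 hh₁) (hlamint 1 hh₂),
        hweighted 0 zero_le_one hh₁, hweighted 1 le_rfl hh₂]
    _ = _ := by simp only [pow_zero, pow_one, mul_one]

theorem le_of_mem_dualValues_of_mem_primalValues (hX : IsCompact X) (hY : IsCompact Y)
    (hf : AEMeasurable f lam) (hfXY : ∀ᵐ x ∂lam, (x, f x) ∈ X ×ˢ Y)
    (hT : ContinuousOn T (X ×ˢ Y)) {v w : ℝ}
    (hw : w ∈ dualValues X Y lam f T) (hv : v ∈ primalValues X Y lam f T) : w ≤ v := by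
  obtain ⟨h₁, h₂, hh₁, hh₂, hle, rfl⟩ := hw
  obtain ⟨φ, _, hφ, hmoments, rfl⟩ := hv
  rw [← integral_add_mul_snd_eq_of_moments_eq hX hY hf hfXY hφ hmoments hh₁ hh₂]
  refine integral_mono_ae (integrable_of_continuousOn_of_ae_mem (hX.prod hY) hφ
    (continuousOn_add_mul_snd hh₁ hh₂)) (integrable_of_continuousOn_of_ae_mem (hX.prod hY) hφ hT) ?_
  filter_upwards [show ∀ᵐ p ∂φ, p ∈ X ×ˢ Y from hφ] with p hp using hle _ hp.1 _ hp.2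

theorem isLeast_primalValues (hX : IsCompact X) (hY : IsCompact Y) (hf : AEMeasurable f lam)
    (hfXY : ∀ᵐ x ∂lam, (x, f x) ∈ X ×ˢ Y) (hT : ContinuousOn T (X ×ˢ Y))
    (hconv : ∀ x ∈ X, ConvexOn ℝ Y fun y ↦ T (x, y)) :
    IsLeast (primalValues X Y lam f T) (∫ x, T (x, f x) ∂lam) :=
  ⟨integral_mem_primalValues hX hY hf hfXY hT, fun _ hv ↦
    (isLUB_le_iff (isLUB_dualValues hX hY hf hfXY hT hconv)).mpr fun _ hw ↦
      le_of_mem_dualValues_of_mem_primalValues hX hY hf hfXY hT hw hv⟩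

theorem no_duality_gap_general (hX : IsCompact X) (hY : IsCompact Y) (hf : AEMeasurable f lam)
    (hfXY : ∀ᵐ x ∂lam, (x, f x) ∈ X ×ˢ Y) (hT : ContinuousOn T (X ×ˢ Y))
    (hconv : ∀ x ∈ X, ConvexOn ℝ Y fun y ↦ T (x, y)) :
    sInf (primalValues X Y lam f T) = sSup (dualValues X Y lam f T) := by
  have hdual := isLUB_dualValues hX hY hf hfXY hT hconv
  rw [(isLeast_primalValues hX hY hf hfXY hT hconv).csInf_eq, hdual.csSup_eq hdual.nonempty]

end Primal

section MonomialSeries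

variable {ι : Type*} [Fintype ι] {θ : ((ι → ℕ) × ℕ) → ℝ} {R : ℝ}

/-- The function `T(x, y) = ∑ θ_d x^{d_x} y^{d_y}`. -/
def monomialSeries (θ : ((ι → ℕ) × ℕ) → ℝ) (p : (ι → ℝ) × ℝ) : ℝ :=
  ∑' d : (ι → ℕ) × ℕ, θ d * ((∏ i, p.1 i ^ d.1 i) * p.2 ^ d.2)

theorem prod_pow_mem_Icc {x : ι → ℝ} (hx : x ∈ Icc 0 1) (d : ι → ℕ) :
    ∏ i, x i ^ d i ∈ Icc (0 : ℝ) 1 :=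
  ⟨Finset.prod_nonneg fun i _ ↦ pow_nonneg (hx.1 i) _,
    Finset.prod_le_one (fun i _ ↦ pow_nonneg (hx.1 i) _) fun i _ ↦ pow_le_one₀ (hx.1 i) (hx.2 i)⟩

theorem norm_mul_monomial_le (hθ : ∀ d, 0 ≤ θ d) {p : (ι → ℝ) × ℝ} (hp : p ∈ Icc 0 1 ×ˢ Icc 0 R)
    (d : (ι → ℕ) × ℕ) : ‖θ d * ((∏ i, p.1 i ^ d.1 i) * p.2 ^ d.2)‖ ≤ θ d * R ^ d.2 := by
  have hx := prod_pow_mem_Icc hp.1 d.1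
  have hy : 0 ≤ p.2 ^ d.2 := pow_nonneg hp.2.1 _
  rw [Real.norm_of_nonneg (mul_nonneg (hθ d) (mul_nonneg hx.1 hy))]
  exact mul_le_mul_of_nonneg_left
    ((mul_le_of_le_one_left hy hx.2).trans (pow_le_pow_left₀ hp.2.1 hp.2.2 _)) (hθ d)

theorem continuousOn_monomialSeries (hθ : ∀ d, 0 ≤ θ d) (hsum : Summable fun d ↦ θ d * R ^ d.2) :
    ContinuousOn (monomialSeries θ) (Icc 0 1 ×ˢ Icc 0 R) :=
  continuousOn_tsum (fun d ↦ by fun_prop) hsum fun d _ hp ↦ norm_mul_monomial_le hθ hp d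

theorem convexOn_monomialSeries (hθ : ∀ d, 0 ≤ θ d) (hsum : Summable fun d ↦ θ d * R ^ d.2)
    {x : ι → ℝ} (hx : x ∈ Icc 0 1) : ConvexOn ℝ (Icc 0 R) fun y ↦ monomialSeries θ (x, y) := by
  have hsummable (y : ℝ) (hy : y ∈ Icc 0 R) :
      Summable fun d : (ι → ℕ) × ℕ ↦ θ d * ((∏ i, x i ^ d.1 i) * y ^ d.2) :=
    .of_norm_bounded hsum fun d ↦ norm_mul_monomial_le hθ (p := (x, y)) ⟨hx, hy⟩ d
  refine ⟨convex_Icc 0 R, fun y hy z hz a b ha hb hab ↦ ?_⟩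
  simp only [monomialSeries, smul_eq_mul]
  rw [← tsum_mul_left, ← tsum_mul_left,
    ← ((hsummable y hy).mul_left a).tsum_add ((hsummable z hz).mul_left b)]
  refine (hsummable _ (convex_Icc 0 R hy hz ha hb hab)).tsum_le_tsum (fun d ↦ ?_)
    (((hsummable y hy).mul_left a).add ((hsummable z hz).mul_left b))
  have hpow := (convexOn_pow d.2).2 hy.1 hz.1 ha hb hab
  have hcoeff : 0 ≤ θ d * ∏ i, x i ^ d.1 i := mul_nonneg (hθ d) (prod_pow_mem_Icc hx d.1).1
  have := mul_le_mul_of_nonneg_left hpow hcoeff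
  simp only [smul_eq_mul] at this
  linarith

end MonomialSeries

/-- No duality gap between the primal LP over measures (minimize `∫ T dφ`
subject to matching the moments of `μ = δ_{f(x)}(dy) λ(dx)` of index `(d_x, d_y)` with
`d_y ≤ 1`) and its dual LP over pairs of continuous functions `h₁, h₂` on `X` satisfying
`h₁(x) + h₂(x)·y ≤ T(x,y)` on `X × Y`. -/
theorem no_duality_gap
    (n : ℕ) (hn : 1 ≤ n)
    (X : Set (Fin n → ℝ)) (hXsub : X ⊆ Icc 0 1) (hXc : IsCompact X)
    (γ : ℝ) (hγ : 0 < γ)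
    (lam : Measure (Fin n → ℝ)) [IsProbabilityMeasure lam] (hlam : lam Xᶜ = 0)
    (f : (Fin n → ℝ) → ℝ) (hf : Measurable f) (hfY : ∀ x ∈ X, f x ∈ Icc 0 γ)
    (θ : ((Fin n → ℕ) × ℕ) → ℝ) (hθ : ∀ d, 0 ≤ θ d)
    (hsum : Summable fun d : (Fin n → ℕ) × ℕ => θ d * max 1 γ ^ d.2)
    (T : (Fin n → ℝ) × ℝ → ℝ)
    (hT : ∀ p : (Fin n → ℝ) × ℝ,
      T p = ∑' d : (Fin n → ℕ) × ℕ, θ d * ((∏ i, p.1 i ^ d.1 i) * p.2 ^ d.2)) :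
    sInf {v : ℝ | ∃ φ : Measure ((Fin n → ℝ) × ℝ), IsFiniteMeasure φ ∧
        φ ((X ×ˢ Icc (0:ℝ) γ)ᶜ) = 0 ∧
        (∀ d : (Fin n → ℕ) × ℕ, d.2 ≤ 1 →
          ∫ p : (Fin n → ℝ) × ℝ, (∏ i, p.1 i ^ d.1 i) * p.2 ^ d.2 ∂φ
            = ∫ x, (∏ i, x i ^ d.1 i) * f x ^ d.2 ∂lam) ∧
        v = ∫ p, T p ∂φ}
      = sSup {w : ℝ | ∃ h₁ h₂ : (Fin n → ℝ) → ℝ, ContinuousOn h₁ X ∧ ContinuousOn h₂ X ∧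
          (∀ x ∈ X, ∀ y ∈ Icc (0:ℝ) γ, h₁ x + h₂ x * y ≤ T (x, y)) ∧
          w = ∫ x, (h₁ x + h₂ x * f x) ∂lam} := by
  obtain rfl : T = monomialSeries θ := funext hT
  have hγR : Icc 0 γ ⊆ Icc 0 (max 1 γ) := Icc_subset_Icc_right (le_max_right 1 γ)
  exact no_duality_gap_general hXc isCompact_Icc hf.aemeasurable
    ((show ∀ᵐ x ∂lam, x ∈ X from hlam).mono fun x hx ↦ ⟨hx, hfY x hx⟩)
    ((continuousOn_monomialSeries hθ hsum).mono (prod_mono hXsub hγR))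
    fun x hx ↦ (convexOn_monomialSeries hθ hsum (hXsub hx)).subset hγR (convex_Icc 0 γ)
end
end

section
/- Fix s ∈ ℕ and let 𝒯_s(φ) := Σ_{d ∈ ℕ^{n+1}_s} φ_{2d}. For every r ≥ max(s, max_j d_j), the semidefinite program τ_r := inf { 𝒯_s(φ) : φ feasible at order r } attains its infimum at some feasible φ^r, and τ_r ≤ 𝒯_s((μ_d)) = Σ_{d ∈ ℕ^{n+1}_s} μ_{2d}. -/
open MeasureTheory Set

noncomputable section

/-- The finite set `ℕ^{n+1}_r` of multi-indices `d ∈ ℕ^n × ℕ` with `|d| ≤ r`. -/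
def idx (n r : ℕ) : Finset ((Fin n → ℕ) × ℕ) :=
  Finset.filter (fun d => (∑ i, d.1 i) + d.2 ≤ r)
    ((Fintype.piFinset fun _ : Fin n => Finset.range (r + 1)) ×ˢ Finset.range (r + 1))

/-- Multi-indices `e ∈ ℕ^n` with `|e| ≤ r`. -/
def xIdx (n r : ℕ) : Finset (Fin n → ℕ) :=
  Finset.filter (fun e => ∑ i, e i ≤ r) (Fintype.piFinset fun _ : Fin n => Finset.range (r + 1))

/-- Evaluation of a polynomial in `x` of degree `≤ r` given by its coefficients `c`. -/
def polyEval (n r : ℕ) (c : (Fin n → ℕ) → ℝ) (x : Fin n → ℝ) : ℝ :=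
  ∑ e ∈ xIdx n r, c e * ∏ i, x i ^ e i

/-- The moment matrix `M_r(φ)`, with rows and columns indexed by `ℕ^{n+1}_r`. -/
def momMat (n r : ℕ) (φ : ((Fin n → ℕ) × ℕ) → ℝ) : Matrix (idx n r) (idx n r) ℝ :=
  fun a b => φ (fun i => a.1.1 i + b.1.1 i, a.1.2 + b.1.2)

/-- The localizing matrix `M_{r−t}(g φ)` of a polynomial `g` in `x` with coefficients `c`
and degree `≤ 2t`. -/
def locMatX (n : ℕ) (c : (Fin n → ℕ) → ℝ) (t r : ℕ) (φ : ((Fin n → ℕ) × ℕ) → ℝ) :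
    Matrix (idx n (r - t)) (idx n (r - t)) ℝ :=
  fun a b => ∑ e ∈ xIdx n (2 * t),
    c e * φ (fun i => e i + a.1.1 i + b.1.1 i, a.1.2 + b.1.2)

/-- The localizing matrix `M_{r−1}(g_{m+1} φ)` of the polynomial `g_{m+1}(x,y) = y(γ−y)`. -/
def locMatY (n : ℕ) (γ : ℝ) (r : ℕ) (φ : ((Fin n → ℕ) × ℕ) → ℝ) :
    Matrix (idx n (r - 1)) (idx n (r - 1)) ℝ :=
  fun a b => γ * φ (fun i => a.1.1 i + b.1.1 i, a.1.2 + b.1.2 + 1)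
    - φ (fun i => a.1.1 i + b.1.1 i, a.1.2 + b.1.2 + 2)

/-- Feasibility of a pseudo-moment sequence `φ` at relaxation order `r`:
`M_r(φ) ⪰ 0`, `M_{r−d_j}(g_j φ) ⪰ 0` for `j = 1,…,m+1`, and `φ_d = μ_d` for all
`d ∈ D = {d : d_y ≤ 1}` with `|d| ≤ 2r`. -/
def Feasible (n m : ℕ) (γ : ℝ) (g : Fin m → (Fin n → ℕ) → ℝ) (t : Fin m → ℕ)
    (μmom : ((Fin n → ℕ) × ℕ) → ℝ) (r : ℕ) (φ : ((Fin n → ℕ) × ℕ) → ℝ) : Prop :=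
  (momMat n r φ).PosSemidef ∧
  (∀ j, (locMatX n (g j) (t j) r φ).PosSemidef) ∧
  (locMatY n γ r φ).PosSemidef ∧
  ∀ d : (Fin n → ℕ) × ℕ, d.2 ≤ 1 → (∑ i, d.1 i) + d.2 ≤ 2 * r → φ d = μmom d

/-!
Every coordinate of order at most `2r` of a feasible sequence is bounded. The data fix the moments
`φ_{(2a, 0)}`; positivity of the moment matrix and of the localizing matrix of `y (γ - y)` give
`φ_{2d + 2e_y} ≤ γ² φ_{2d}`, where `e_y` is the exponent of `y`, which bounds the diagonal of the
moment matrix, and a positive semidefinite matrix is bounded by its diagonal. Feasibility is a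
closed condition involving only these coordinates, so the minimum is attained by compactness. The
true moments are feasible because each matrix they define is the expectation of a nonnegative
multiple of a rank-one matrix `v vᵀ`.
-/

lemma exists_isMinOn_of_dependsOn {ι β : Type*} {α : ι → Type*} [∀ i, TopologicalSpace (α i)]
    [LinearOrder β] {S : Set (∀ i, α i)} {D : Set ι} {T : (∀ i, α i) → β} (hS : IsClosed S)
    (hne : S.Nonempty) (hSD : DependsOn (· ∈ S) D)
    (hbdd : ∀ i ∈ D, ∃ K, IsCompact K ∧ ∀ φ ∈ S, φ i ∈ K)
    (hT : LowerSemicontinuous T) (hTD : DependsOn T D) :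
    ∃ φ ∈ S, IsMinOn T S φ := by
  classical
  obtain ⟨φ₀, hφ₀⟩ := hne
  -- Freezing the coordinates outside `D` at those of `φ₀` confines the search to a compact box.
  have hbox : ∀ i, ∃ K, IsCompact K ∧ ∀ φ ∈ S, D.piecewise φ φ₀ i ∈ K := by
    intro i
    by_cases hi : i ∈ D
    · simpa only [piecewise_eq_of_mem D _ _ hi] using hbdd i hi
    · exact ⟨{φ₀ i}, isCompact_singleton, fun φ _ => piecewise_eq_of_notMem D φ φ₀ hi⟩
  choose K hK hmemK using hbox
  have hagree : ∀ φ, ∀ i ∈ D, D.piecewise φ φ₀ i = φ i := fun φ _ hi =>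
    piecewise_eq_of_mem D φ φ₀ hi
  have hmem : ∀ φ ∈ S, D.piecewise φ φ₀ ∈ S ∩ univ.pi K := fun φ hφ =>
    ⟨(hSD (hagree φ)).mpr hφ, fun i _ => hmemK i φ hφ⟩
  obtain ⟨φ, hφ, hmin⟩ := LowerSemicontinuousOn.exists_isMinOn ⟨_, hmem φ₀ hφ₀⟩
    ((isCompact_univ_pi hK).inter_left hS) (hT.lowerSemicontinuousOn _)
  exact ⟨φ, hφ.1, fun ψ hψ => (hmin (hmem ψ hψ)).trans_eq (hTD (hagree ψ))⟩

section PosSemidef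

variable {ι : Type*}

lemma isClosed_setOf_posSemidef {R : Type*} [Ring R] [PartialOrder R] [StarRing R]
    [TopologicalSpace R] [IsTopologicalSemiring R] [ContinuousStar R] [OrderClosedTopology R] :
    IsClosed {M : Matrix ι ι R | M.PosSemidef} := by
  simp only [Matrix.PosSemidef, Matrix.IsHermitian, Finsupp.sum, ofPred_and, ofPred_forall]
  refine (isClosed_eq (by fun_prop) continuous_id).inter
    (isClosed_iInter fun x => isClosed_le continuous_const ?_)
  fun_prop

lemma two_point_nonneg_of_posSemidef {M : Matrix ι ι ℝ} (hM : M.PosSemidef) (i j : ι) (c d : ℝ) :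
    0 ≤ c ^ 2 * M i i + 2 * (c * d) * M i j + d ^ 2 * M j j := by
  have hsymm : M j i = M i j := hM.isHermitian.apply i j
  have h := (hM.submatrix ![i, j]).dotProduct_mulVec_nonneg ![c, d]
  simp only [dotProduct, Pi.star_apply, star_trivial, Matrix.mulVec, Matrix.submatrix_apply,
    Fin.sum_univ_two, Matrix.cons_val_zero, Matrix.cons_val_one, hsymm] at h
  linarith

lemma abs_apply_le_of_posSemidef {M : Matrix ι ι ℝ} (hM : M.PosSemidef) (i j : ι) :
    |M i j| ≤ (M i i + M j j) / 2 := by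
  have hadd := two_point_nonneg_of_posSemidef hM i j 1 1
  have hsub := two_point_nonneg_of_posSemidef hM i j 1 (-1)
  rw [abs_le]
  constructor <;> linarith

lemma posSemidef_integral {Ω : Type*} [MeasurableSpace Ω] {ν : Measure Ω}
    {M : Ω → Matrix ι ι ℝ} (hM : ∀ᵐ ω ∂ν, (M ω).PosSemidef)
    (hint : ∀ i j, Integrable (fun ω => M ω i j) ν) :
    (Matrix.of fun i j => ∫ ω, M ω i j ∂ν).PosSemidef := by
  constructor
  · ext i j
    refine integral_congr_ae ?_
    filter_upwards [hM] with ω hω using hω.isHermitian.apply i j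
  · intro x
    have hterm : ∀ i j, Integrable (fun ω => star (x i) * M ω i j * x j) ν := fun i j =>
      ((hint i j).const_mul _).mul_const _
    have hform : (x.sum fun i xi => x.sum fun j xj => star xi * (∫ ω, M ω i j ∂ν) * xj)
        = ∫ ω, x.sum fun i xi => x.sum fun j xj => star xi * M ω i j * xj ∂ν := by
      simp only [Finsupp.sum]
      rw [integral_finsetSum _ fun i _ => integrable_finsetSum _ fun j _ => hterm i j]
      refine Finset.sum_congr rfl fun i _ => ?_
      rw [integral_finsetSum _ fun j _ => hterm i j]
      simp only [integral_mul_const, integral_const_mul]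
    simp only [Matrix.of_apply, hform]
    refine integral_nonneg_of_ae ?_
    filter_upwards [hM] with ω hω using hω.2 x

end PosSemidef

section MultiIndex

variable {n r k : ℕ} {a b d : (Fin n → ℕ) × ℕ}

lemma mem_idx : d ∈ idx n r ↔ (∑ i, d.1 i) + d.2 ≤ r := by
  simp only [idx, Finset.mem_filter, Finset.mem_product, Fintype.mem_piFinset, Finset.mem_range,
    and_iff_right_iff_imp]
  intro h
  have hle : ∀ i, d.1 i ≤ ∑ i, d.1 i := fun i =>
    Finset.single_le_sum (fun _ _ => Nat.zero_le _) (Finset.mem_univ i)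
  exact ⟨fun i => by have := hle i; omega, by omega⟩

lemma mk_zero_mem_idx_of_mem_xIdx {e : Fin n → ℕ} (he : e ∈ xIdx n r) : (e, 0) ∈ idx n r :=
  mem_idx.2 (Finset.mem_filter.1 he).2

lemma zero_mk_mem_idx (h : k ≤ r) : ((0, k) : (Fin n → ℕ) × ℕ) ∈ idx n r :=
  mem_idx.2 (by simpa using h)

lemma idx_mono (h : r ≤ k) : idx n r ⊆ idx n k := fun _ hd =>
  mem_idx.2 ((mem_idx.1 hd).trans h)

lemma add_mem_idx (ha : a ∈ idx n r) (hb : b ∈ idx n k) : a + b ∈ idx n (r + k) := by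
  rw [mem_idx] at ha hb ⊢
  simp only [Prod.fst_add, Prod.snd_add, Pi.add_apply, Finset.sum_add_distrib]
  omega

lemma add_mem_idx_two_mul (ha : a ∈ idx n r) (hb : b ∈ idx n r) : a + b ∈ idx n (2 * r) :=
  two_mul r ▸ add_mem_idx ha hb

lemma exists_add_eq_of_mem_idx (hd : d ∈ idx n (r + k)) :
    ∃ a ∈ idx n r, ∃ b ∈ idx n k, a + b = d := by
  obtain ⟨u, hu, hdeg⟩ := (Finsupp.equivFunOnFinite.symm d.1).exists_le_degree_eq
    (min r (∑ i, d.1 i)) (by simp [Finsupp.degree_eq_sum])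
  obtain ⟨v, huv⟩ := le_iff_exists_add.mp hu
  have hd₁ : d.1 = u + v := congrArg DFunLike.coe huv
  have hsum : ∑ i, d.1 i = ∑ i, u i + ∑ i, v i := by
    simp only [hd₁, Pi.add_apply, Finset.sum_add_distrib]
  rw [Finsupp.degree_eq_sum] at hdeg
  rw [mem_idx] at hd
  refine ⟨(u, min d.2 (r - ∑ i, u i)), mem_idx.2 ?_, (v, d.2 - min d.2 (r - ∑ i, u i)),
    mem_idx.2 ?_, Prod.ext hd₁.symm ?_⟩ <;> dsimp only [Prod.snd_add] <;> omega

end MultiIndex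

section Matrices

variable {n r t : ℕ} {γ : ℝ} {c : (Fin n → ℕ) → ℝ} {φ : (Fin n → ℕ) × ℕ → ℝ}

lemma momMat_apply (a b : idx n r) : momMat n r φ a b = φ (a.1 + b.1) :=
  rfl

lemma locMatX_apply (a b : idx n (r - t)) :
    locMatX n c t r φ a b = ∑ e ∈ xIdx n (2 * t), c e * φ ((e, 0) + (a.1 + b.1)) := by
  refine Finset.sum_congr rfl fun e _ => congrArg (c e * φ ·) (Prod.ext ?_ ?_)
  · exact add_assoc e a.1.1 b.1.1
  · exact (zero_add _).symm

lemma locMatY_apply (a b : idx n (r - 1)) :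
    locMatY n γ r φ a b = γ * φ ((0, 1) + (a.1 + b.1)) - φ ((0, 2) + (a.1 + b.1)) := by
  have hshift : ∀ k, (0, k) + (a.1 + b.1)
      = (fun i => a.1.1 i + b.1.1 i, a.1.2 + b.1.2 + k) := fun k =>
    Prod.ext (zero_add _) (add_comm _ _)
  simp only [hshift, locMatY]

lemma add_add_mem_idx {d : (Fin n → ℕ) × ℕ} (hd : d ∈ idx n (2 * t)) (ht : t ≤ r)
    (a b : idx n (r - t)) : d + (a.1 + b.1) ∈ idx n (2 * r) := by
  have h := add_mem_idx hd (add_mem_idx_two_mul a.2 b.2)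
  rwa [← mul_add, Nat.add_sub_of_le ht] at h

lemma dependsOn_momMat : DependsOn (momMat n r) ↑(idx n (2 * r)) :=
  fun _ _ h => Matrix.ext fun a b => h _ (add_mem_idx_two_mul a.2 b.2)

lemma dependsOn_locMatX (ht : t ≤ r) : DependsOn (locMatX n c t r) ↑(idx n (2 * r)) := by
  intro φ ψ h
  ext a b
  simp only [locMatX_apply]
  refine Finset.sum_congr rfl fun e he => ?_
  rw [h _ (add_add_mem_idx (mk_zero_mem_idx_of_mem_xIdx he) ht a b)]

lemma dependsOn_locMatY (hr : 1 ≤ r) : DependsOn (locMatY n γ r) ↑(idx n (2 * r)) := by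
  intro φ ψ h
  ext a b
  simp only [locMatY_apply]
  rw [h _ (add_add_mem_idx (zero_mk_mem_idx (by norm_num)) hr a b),
    h _ (add_add_mem_idx (zero_mk_mem_idx (by norm_num)) hr a b)]

end Matrices

section FeasibleSet

variable {n m r : ℕ} {γ : ℝ} {g : Fin m → (Fin n → ℕ) → ℝ} {t : Fin m → ℕ}
  {μ : (Fin n → ℕ) × ℕ → ℝ}

lemma isClosed_setOf_feasible : IsClosed {φ | Feasible n m γ g t μ r φ} := by
  simp only [Feasible, ofPred_and, ofPred_forall]
  refine IsClosed.inter ?_ (IsClosed.inter (isClosed_iInter fun j => ?_) (IsClosed.inter ?_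
    (isClosed_iInter fun d => isClosed_iInter fun _ => isClosed_iInter fun _ =>
      isClosed_eq (continuous_apply d) continuous_const)))
  · exact isClosed_setOf_posSemidef.preimage
      (continuous_matrix fun a b => by simp only [momMat_apply]; fun_prop)
  · exact isClosed_setOf_posSemidef.preimage
      (continuous_matrix fun a b => by simp only [locMatX_apply]; fun_prop)
  · exact isClosed_setOf_posSemidef.preimage
      (continuous_matrix fun a b => by simp only [locMatY_apply]; fun_prop)

lemma dependsOn_feasible (hr : 1 ≤ r) (ht : ∀ j, t j ≤ r) :
    DependsOn (Feasible n m γ g t μ r) ↑(idx n (2 * r)) := by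
  intro φ ψ h
  have hfix : (∀ d : (Fin n → ℕ) × ℕ, d.2 ≤ 1 → (∑ i, d.1 i) + d.2 ≤ 2 * r → φ d = μ d) ↔
      ∀ d : (Fin n → ℕ) × ℕ, d.2 ≤ 1 → (∑ i, d.1 i) + d.2 ≤ 2 * r → ψ d = μ d :=
    forall₃_congr fun d _ hd => by rw [h d (mem_idx.2 hd)]
  simp only [Feasible, dependsOn_momMat h, dependsOn_locMatX (ht _) h, dependsOn_locMatY hr h, hfix]

lemma Feasible.apply_add_self_succ_le {φ : (Fin n → ℕ) × ℕ → ℝ} (h : Feasible n m γ g t μ r φ)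
    {a : Fin n → ℕ} {k : ℕ} (hak : (a, k + 1) ∈ idx n r) :
    φ ((a, k + 1) + (a, k + 1)) ≤ γ ^ 2 * φ ((a, k) + (a, k)) := by
  have hdeg : (∑ i, a i) + (k + 1) ≤ r := mem_idx.1 hak
  have hak₀ : (a, k) ∈ idx n (r - 1) := mem_idx.2 (by dsimp only; omega)
  -- With `d = (a, k)`, these say that `γ² φ_{2d} - 2γ φ_{2d + e_y} + φ_{2d + 2e_y} ≥ 0` and
  -- `γ φ_{2d + e_y} - φ_{2d + 2e_y} ≥ 0`; eliminate `φ_{2d + e_y}`.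
  have hmom := two_point_nonneg_of_posSemidef h.1 ⟨(a, k), idx_mono (Nat.sub_le r 1) hak₀⟩
    ⟨(a, k + 1), hak⟩ γ (-1)
  have hloc := h.2.2.1.diag_nonneg (i := ⟨(a, k), hak₀⟩)
  have hone : (a, k) + (a, k + 1) = (0, 1) + ((a, k) + (a, k)) :=
    Prod.ext (zero_add _).symm (by dsimp only [Prod.snd_add]; omega)
  have htwo : (a, k + 1) + (a, k + 1) = (0, 2) + ((a, k) + (a, k)) :=
    Prod.ext (zero_add _).symm (by dsimp only [Prod.snd_add]; omega)
  simp only [momMat_apply, hone, htwo] at hmom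
  rw [locMatY_apply] at hloc
  rw [htwo]
  linarith

lemma Feasible.apply_add_self_le {φ : (Fin n → ℕ) × ℕ → ℝ} (h : Feasible n m γ g t μ r φ)
    {a : (Fin n → ℕ) × ℕ} (ha : a ∈ idx n r) :
    φ (a + a) ≤ (γ ^ 2) ^ a.2 * μ (a.1 + a.1, 0) := by
  obtain ⟨a, k⟩ := a
  induction k with
  | zero =>
    have hfix : φ ((a, 0) + (a, 0)) = μ (a + a, 0) :=
      h.2.2.2 _ zero_le_one (mem_idx.1 (add_mem_idx_two_mul ha ha))
    rw [hfix, pow_zero, one_mul]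
  | succ k ih =>
    have hdeg : (∑ i, a i) + (k + 1) ≤ r := mem_idx.1 ha
    calc φ ((a, k + 1) + (a, k + 1))
        ≤ γ ^ 2 * φ ((a, k) + (a, k)) := h.apply_add_self_succ_le ha
      _ ≤ γ ^ 2 * ((γ ^ 2) ^ k * μ (a + a, 0)) :=
        mul_le_mul_of_nonneg_left (ih (mem_idx.2 (by dsimp only; omega))) (sq_nonneg γ)
      _ = (γ ^ 2) ^ (k + 1) * μ (a + a, 0) := by ring

lemma exists_abs_le_of_feasible {d : (Fin n → ℕ) × ℕ} (hd : d ∈ idx n (2 * r)) :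
    ∃ B, ∀ φ, Feasible n m γ g t μ r φ → |φ d| ≤ B := by
  rw [two_mul] at hd
  obtain ⟨a, ha, b, hb, rfl⟩ := exists_add_eq_of_mem_idx hd
  refine ⟨((γ ^ 2) ^ a.2 * μ (a.1 + a.1, 0) + (γ ^ 2) ^ b.2 * μ (b.1 + b.1, 0)) / 2,
    fun φ h => ?_⟩
  calc |φ (a + b)| ≤ (φ (a + a) + φ (b + b)) / 2 :=
        abs_apply_le_of_posSemidef h.1 ⟨a, ha⟩ ⟨b, hb⟩
    _ ≤ _ := by linarith [h.apply_add_self_le ha, h.apply_add_self_le hb]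

lemma exists_isMinOn_feasible {β : Type*} [LinearOrder β] {T : ((Fin n → ℕ) × ℕ → ℝ) → β}
    (hr : 1 ≤ r) (ht : ∀ j, t j ≤ r) (hne : ∃ φ, Feasible n m γ g t μ r φ)
    (hT : LowerSemicontinuous T) (hTD : DependsOn T ↑(idx n (2 * r))) :
    ∃ φ, Feasible n m γ g t μ r φ ∧ IsMinOn T {ψ | Feasible n m γ g t μ r ψ} φ := by
  refine exists_isMinOn_of_dependsOn isClosed_setOf_feasible hne (dependsOn_feasible hr ht)
    (fun d hd => ?_) hT hTD
  obtain ⟨B, hB⟩ := exists_abs_le_of_feasible hd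
  exact ⟨Icc (-B) B, isCompact_Icc, fun φ hφ => abs_le.1 (hB φ hφ)⟩

end FeasibleSet

section Moments

variable {n m r : ℕ}

/-- The monomial `x^{d_x} y^{d_y}`, evaluated at the point `z = (x, y)`. -/
def monomialEval (d : (Fin n → ℕ) × ℕ) (z : (Fin n → ℝ) × ℝ) : ℝ :=
  (∏ i, z.1 i ^ d.1 i) * z.2 ^ d.2

/-- The moment sequence `d ↦ ∫ Z₁^{d_x} Z₂^{d_y} dν` of the image measure of `ν` under
`Z = (Z₁, Z₂)`. The measure `μ` on `X × Y` of the problem is the image of `λ` under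
`x ↦ (x, f x)`. -/
def momentSeq {Ω : Type*} [MeasurableSpace Ω] (ν : Measure Ω) (Z : Ω → (Fin n → ℝ) × ℝ)
    (d : (Fin n → ℕ) × ℕ) : ℝ :=
  ∫ ω, monomialEval d (Z ω) ∂ν

lemma monomialEval_add (a b : (Fin n → ℕ) × ℕ) (z : (Fin n → ℝ) × ℝ) :
    monomialEval (a + b) z = monomialEval a z * monomialEval b z := by
  simp only [monomialEval, Prod.fst_add, Prod.snd_add, Pi.add_apply, pow_add,
    Finset.prod_mul_distrib]
  ring

lemma continuous_monomialEval (d : (Fin n → ℕ) × ℕ) : Continuous (monomialEval d) := by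
  unfold monomialEval
  fun_prop

lemma momMat_monomialEval (z : (Fin n → ℝ) × ℝ) :
    momMat n r (monomialEval · z) =
      Matrix.vecMulVec (fun a : idx n r => monomialEval a.1 z) fun a => monomialEval a.1 z :=
  Matrix.ext fun _ _ => monomialEval_add _ _ z

lemma locMatX_monomialEval (c : (Fin n → ℕ) → ℝ) (t : ℕ) (z : (Fin n → ℝ) × ℝ) :
    locMatX n c t r (monomialEval · z) =
      polyEval n (2 * t) c z.1 • momMat n (r - t) (monomialEval · z) := by
  ext a b
  simp only [locMatX_apply, momMat_apply, Matrix.smul_apply, smul_eq_mul, polyEval, Finset.sum_mul]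
  refine Finset.sum_congr rfl fun e _ => ?_
  rw [monomialEval_add]
  simp only [monomialEval, pow_zero, mul_one, mul_assoc]

lemma locMatY_monomialEval (γ : ℝ) (z : (Fin n → ℝ) × ℝ) :
    locMatY n γ r (monomialEval · z) =
      (z.2 * (γ - z.2)) • momMat n (r - 1) (monomialEval · z) := by
  ext a b
  rw [locMatY_apply, monomialEval_add (0, 1), monomialEval_add (0, 2)]
  simp only [Matrix.smul_apply, smul_eq_mul, momMat_apply, monomialEval, Pi.zero_apply, pow_zero,
    Finset.prod_const_one]
  ring

lemma posSemidef_momMat_monomialEval (z : (Fin n → ℝ) × ℝ) :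
    (momMat n r (monomialEval · z)).PosSemidef := by
  rw [momMat_monomialEval]
  exact Matrix.posSemidef_vecMulVec_self_star _

variable {Ω : Type*} [MeasurableSpace Ω] {ν : Measure Ω} {Z : Ω → (Fin n → ℝ) × ℝ}

lemma posSemidef_momMat_momentSeq
    (hint : ∀ d ∈ idx n (2 * r), Integrable (fun ω => monomialEval d (Z ω)) ν) :
    (momMat n r (momentSeq ν Z)).PosSemidef :=
  posSemidef_integral (.of_forall fun ω => posSemidef_momMat_monomialEval (Z ω))
    fun a b => hint _ (add_mem_idx_two_mul a.2 b.2)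

lemma posSemidef_locMatX_momentSeq {c : (Fin n → ℕ) → ℝ} {t : ℕ} (ht : t ≤ r)
    (hint : ∀ d ∈ idx n (2 * r), Integrable (fun ω => monomialEval d (Z ω)) ν)
    (hc : ∀ᵐ ω ∂ν, 0 ≤ polyEval n (2 * t) c (Z ω).1) :
    (locMatX n c t r (momentSeq ν Z)).PosSemidef := by
  have hterm : ∀ a b : idx n (r - t), ∀ e ∈ xIdx n (2 * t),
      Integrable (fun ω => c e * monomialEval ((e, 0) + (a.1 + b.1)) (Z ω)) ν := fun a b e he =>
    (hint _ (add_add_mem_idx (mk_zero_mem_idx_of_mem_xIdx he) ht a b)).const_mul _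
  have hentry : locMatX n c t r (momentSeq ν Z) =
      Matrix.of fun a b => ∫ ω, locMatX n c t r (monomialEval · (Z ω)) a b ∂ν := by
    ext a b
    simp only [locMatX_apply, Matrix.of_apply]
    rw [integral_finsetSum _ (hterm a b)]
    simp only [integral_const_mul, momentSeq]
  rw [hentry]
  refine posSemidef_integral ?_ fun a b => ?_
  · filter_upwards [hc] with ω hω
    rw [locMatX_monomialEval]
    exact (posSemidef_momMat_monomialEval (Z ω)).smul hω
  · simp only [locMatX_apply]
    exact integrable_finsetSum _ (hterm a b)

lemma posSemidef_locMatY_momentSeq {γ : ℝ} (hr : 1 ≤ r)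
    (hint : ∀ d ∈ idx n (2 * r), Integrable (fun ω => monomialEval d (Z ω)) ν)
    (hγ : ∀ᵐ ω ∂ν, 0 ≤ (Z ω).2 * (γ - (Z ω).2)) :
    (locMatY n γ r (momentSeq ν Z)).PosSemidef := by
  have hshift : ∀ a b : idx n (r - 1), ∀ k ≤ 2,
      Integrable (fun ω => monomialEval ((0, k) + (a.1 + b.1)) (Z ω)) ν := fun a b k hk =>
    hint _ (add_add_mem_idx (zero_mk_mem_idx hk) hr a b)
  have hentry : locMatY n γ r (momentSeq ν Z) =
      Matrix.of fun a b => ∫ ω, locMatY n γ r (monomialEval · (Z ω)) a b ∂ν := by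
    ext a b
    simp only [locMatY_apply, Matrix.of_apply]
    rw [integral_sub ((hshift a b 1 one_le_two).const_mul γ) (hshift a b 2 le_rfl),
      integral_const_mul]
    rfl
  rw [hentry]
  refine posSemidef_integral ?_ fun a b => ?_
  · filter_upwards [hγ] with ω hω
    rw [locMatY_monomialEval]
    exact (posSemidef_momMat_monomialEval (Z ω)).smul hω
  · simp only [locMatY_apply]
    exact ((hshift a b 1 one_le_two).const_mul γ).sub (hshift a b 2 le_rfl)

lemma feasible_momentSeq {γ : ℝ} {g : Fin m → (Fin n → ℕ) → ℝ} {t : Fin m → ℕ}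
    (hr : 1 ≤ r) (ht : ∀ j, t j ≤ r)
    (hint : ∀ d ∈ idx n (2 * r), Integrable (fun ω => monomialEval d (Z ω)) ν)
    (hg : ∀ j, ∀ᵐ ω ∂ν, 0 ≤ polyEval n (2 * t j) (g j) (Z ω).1)
    (hγ : ∀ᵐ ω ∂ν, 0 ≤ (Z ω).2 * (γ - (Z ω).2)) :
    Feasible n m γ g t (momentSeq ν Z) r (momentSeq ν Z) :=
  ⟨posSemidef_momMat_momentSeq hint, fun j => posSemidef_locMatX_momentSeq (ht j) hint (hg j),
    posSemidef_locMatY_momentSeq hr hint hγ, fun _ _ _ => rfl⟩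

end Moments

lemma integrable_comp_of_ae_mem_isCompact {Ω E F : Type*} [MeasurableSpace Ω] {ν : Measure Ω}
    [IsFiniteMeasure ν] [TopologicalSpace E] [NormedAddCommGroup F] {h : E → F} {Z : Ω → E}
    {K : Set E} (hh : Continuous h) (hZ : AEStronglyMeasurable Z ν) (hK : IsCompact K)
    (hZK : ∀ᵐ ω ∂ν, Z ω ∈ K) : Integrable (fun ω => h (Z ω)) ν := by
  obtain ⟨C, hC⟩ := hK.exists_bound_of_continuousOn hh.continuousOn
  exact .of_bound (hh.comp_aestronglyMeasurable hZ) C (hZK.mono fun ω hω => hC _ hω)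

/-- The objective `𝒯_s(φ) = Σ_{|d| ≤ s} φ_{2d}` of the semidefinite program. -/
def evenMomentSum (n s : ℕ) (φ : (Fin n → ℕ) × ℕ → ℝ) : ℝ :=
  ∑ d ∈ idx n s, φ (fun i => 2 * d.1 i, 2 * d.2)

lemma continuous_evenMomentSum (n s : ℕ) : Continuous (evenMomentSum n s) := by
  unfold evenMomentSum
  fun_prop

lemma dependsOn_evenMomentSum {n s r : ℕ} (hsr : s ≤ r) :
    DependsOn (evenMomentSum n s) ↑(idx n (2 * r)) := by
  refine fun φ ψ h => Finset.sum_congr rfl fun d hd => h _ (mem_idx.2 ?_)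
  have hdeg := mem_idx.1 hd
  simp only [← Finset.mul_sum]
  omega

theorem sdp_attained_and_bounded_general {Ω : Type*} [MeasurableSpace Ω] {ν : Measure Ω}
    {n m r s : ℕ} {γ : ℝ} {g : Fin m → (Fin n → ℕ) → ℝ} {t : Fin m → ℕ}
    {Z : Ω → (Fin n → ℝ) × ℝ} (hsr : s ≤ r) (hr : 1 ≤ r) (ht : ∀ j, t j ≤ r)
    (hint : ∀ d ∈ idx n (2 * r), Integrable (fun ω => monomialEval d (Z ω)) ν)
    (hg : ∀ j, ∀ᵐ ω ∂ν, 0 ≤ polyEval n (2 * t j) (g j) (Z ω).1)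
    (hγ : ∀ᵐ ω ∂ν, 0 ≤ (Z ω).2 * (γ - (Z ω).2)) :
    ∃ φr, Feasible n m γ g t (momentSeq ν Z) r φr ∧
      (∀ φ, Feasible n m γ g t (momentSeq ν Z) r φ →
        evenMomentSum n s φr ≤ evenMomentSum n s φ) ∧
      evenMomentSum n s φr ≤ evenMomentSum n s (momentSeq ν Z) := by
  have hfeas : Feasible n m γ g t (momentSeq ν Z) r (momentSeq ν Z) :=
    feasible_momentSeq hr ht hint hg hγ
  obtain ⟨φr, hφr, hmin⟩ := exists_isMinOn_feasible hr ht ⟨_, hfeas⟩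
    (continuous_evenMomentSum n s).lowerSemicontinuous (dependsOn_evenMomentSum hsr)
  exact ⟨φr, hφr, fun _ hφ => hmin hφ, hmin hfeas⟩

/-- For fixed `s` and every `r ≥ max(s, max_j d_j)`, the order-`r`
semidefinite relaxation with objective `𝒯_s(φ) = Σ_{|d| ≤ s} φ_{2d}` attains its infimum
at some feasible `φ^r`, and the attained value is at most `𝒯_s(μ) = Σ_{|d| ≤ s} μ_{2d}`. -/
theorem sdp_attained_and_bounded
    (n m : ℕ) (hn : 1 ≤ n) (hm : 1 ≤ m)
    (γ : ℝ) (hγ : 0 < γ)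
    (g : Fin m → (Fin n → ℕ) → ℝ) (t : Fin m → ℕ)
    (hgdeg : ∀ j e, 2 * t j < ∑ i, e i → g j e = 0)
    (hg1t : t ⟨0, hm⟩ = 1)
    (hg1 : ∀ x : Fin n → ℝ,
      polyEval n (2 * t ⟨0, hm⟩) (g ⟨0, hm⟩) x = (n : ℝ) - ∑ i, x i ^ 2)
    (X : Set (Fin n → ℝ))
    (hXdef : X = {x | ∀ j, 0 ≤ polyEval n (2 * t j) (g j) x})
    (hXsub : X ⊆ Icc 0 1) (hXc : IsCompact X)
    (lam : Measure (Fin n → ℝ)) [IsProbabilityMeasure lam] (hlam : lam Xᶜ = 0)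
    (f : (Fin n → ℝ) → ℝ) (hf : Measurable f) (hfY : ∀ x ∈ X, f x ∈ Icc 0 γ)
    (μmom : ((Fin n → ℕ) × ℕ) → ℝ)
    (hμmom : ∀ d : (Fin n → ℕ) × ℕ,
      μmom d = ∫ x, (∏ i, x i ^ d.1 i) * f x ^ d.2 ∂lam)
    (s : ℕ) :
    ∀ r : ℕ, s ≤ r → 1 ≤ r → (∀ j, t j ≤ r) →
      ∃ φr : ((Fin n → ℕ) × ℕ) → ℝ, Feasible n m γ g t μmom r φr ∧
        (∀ φ : ((Fin n → ℕ) × ℕ) → ℝ, Feasible n m γ g t μmom r φ →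
          ∑ d ∈ idx n s, φr (fun i => 2 * d.1 i, 2 * d.2)
            ≤ ∑ d ∈ idx n s, φ (fun i => 2 * d.1 i, 2 * d.2)) ∧
        ∑ d ∈ idx n s, φr (fun i => 2 * d.1 i, 2 * d.2)
          ≤ ∑ d ∈ idx n s, μmom (fun i => 2 * d.1 i, 2 * d.2) := by
  intro r hsr hr ht
  obtain rfl : μmom = momentSeq lam fun x => (x, f x) := funext hμmom
  have hX : ∀ᵐ x ∂lam, x ∈ X := hlam
  have hZ : Measurable fun x => (x, f x) := measurable_id.prodMk hf
  refine sdp_attained_and_bounded_general hsr hr ht (fun d _ => ?_) (fun j => ?_) ?_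
  · exact integrable_comp_of_ae_mem_isCompact (continuous_monomialEval d)
      hZ.aestronglyMeasurable (hXc.prod isCompact_Icc) (hX.mono fun x hx => ⟨hx, hfY x hx⟩)
  · exact hX.mono fun x hx => (hXdef.le hx) j
  · exact hX.mono fun x hx => mul_nonneg (hfY x hx).1 (sub_nonneg.2 (hfY x hx).2)
end
end
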